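/- arXiv:1012.0827 — 2 statements merged into one kernel-verified Lean document; each statement's English description precedes it below -/
import Mathlib

section
/- There exists a 6-piece trisection of the square: there are six closed subsets P₁,…,P₆ of the plane ℝ² whose union is the square [0,√3]×[0,√3], whose interiors are pairwise disjoint, together with six isometries g₁,…,g₆ of ℝ², such that the images g₁(P₁),…,g₆(P₆) have pairwise disjoint interiors and their union is the union of the three pairwise disjoint unit squares [0,1]×[0,1], [2,3]×[0,1] and [4,5]×[0,1]. -/
open Real Set

/-- The plane. -/
abbrev Plane := EuclideanSpace ℝ (Fin 2)

/-- The axis-aligned closed rectangle `[a,b] × [c,d]` in the plane. -/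
noncomputable def rect (a b c d : ℝ) : Set Plane :=
  {p | p 0 ∈ Set.Icc a b ∧ p 1 ∈ Set.Icc c d}

/-- Two sets on opposite sides of the line `a x + b y = c` have disjoint interiors. -/
theorem interior_inter_interior_eq_empty_of_line {S T : Set Plane} (a b c : ℝ)
    (hab : 0 < a * a + b * b)
    (hS : ∀ p ∈ S, a * p 0 + b * p 1 ≤ c) (hT : ∀ p ∈ T, c ≤ a * p 0 + b * p 1) :
    interior S ∩ interior T = ∅ := by
  rw [Set.eq_empty_iff_forall_notMem]
  intro p hp
  have hU : IsOpen (interior S ∩ interior T) := isOpen_interior.inter isOpen_interior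
  have hcont : Continuous fun t : ℝ => p + t • (!₂[a, b] : Plane) := by fun_prop
  have hnhds : ∀ᶠ t in nhdsWithin (0 : ℝ) (Set.Ioi 0),
      p + t • (!₂[a, b] : Plane) ∈ interior S ∩ interior T :=
    nhdsWithin_le_nhds (hcont.continuousAt.preimage_mem_nhds (hU.mem_nhds (by simpa using hp)))
  obtain ⟨t, ht, ht0⟩ := (hnhds.and self_mem_nhdsWithin).exists
  have hle := hS _ (interior_subset ht.1)
  have hge := hT _ (interior_subset hp.2)
  have htpos : 0 < t * (a * a + b * b) := mul_pos ht0 hab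
  simp at hle
  nlinarith

/-- The six pieces inside the square `[0,√3] × [0,√3]`, described in coordinates. -/
def trisectionPiece (i : Fin 6) (x y : ℝ) : Prop :=
  match i with
  | 0 => 0 ≤ x ∧ x ≤ 1 ∧ 0 ≤ y ∧ y ≤ 1
  | 1 => 1 ≤ x ∧ x ≤ √3 ∧ 0 ≤ y ∧ y ≤ 1 ∧ x + √3 * y ≤ 3
  | 2 => 0 ≤ x ∧ x ≤ 2 - √3 ∧ 1 ≤ y ∧ x + √3 * y ≤ 3
  | 3 => 2 - √3 ≤ x ∧ 1 ≤ y ∧ x + √3 * y ≤ 3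
  | 4 => x ≤ √3 - 1 ∧ y ≤ √3 ∧ 3 ≤ x + √3 * y
  | 5 => √3 - 1 ≤ x ∧ x ≤ √3 ∧ y ≤ √3 ∧ 3 ≤ x + √3 * y

/-- The vectors translating the pieces of the large square into the unit squares. -/
noncomputable def trisectionShift : Fin 6 → Plane :=
  ![!₂[0, 0], !₂[1, 0], !₂[√3 + 1, -1], !₂[√3 + 2, -1], !₂[4 - √3, 1 - √3], !₂[5 - √3, 1 - √3]]

theorem sqrt_three_mul_self : √3 * √3 = 3 := Real.mul_self_sqrt (by norm_num)

theorem sqrt_three_gt : 1.7 < √3 := Real.lt_sqrt_of_sq_lt (by norm_num)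

theorem sqrt_three_lt : √3 < 1.8 := (Real.sqrt_lt' (by norm_num)).2 (by norm_num)

theorem isClosed_trisectionPiece (i : Fin 6) :
    IsClosed {p : Plane | trisectionPiece i (p 0) (p 1)} := by
  fin_cases i <;> simp only [trisectionPiece, Set.ofPred_and] <;>
    repeat' first
      | apply IsClosed.inter
      | exact isClosed_le (by fun_prop) (by fun_prop)

theorem exists_trisectionPiece_iff (x y : ℝ) :
    (∃ i, trisectionPiece i x y) ↔ (0 ≤ x ∧ x ≤ √3) ∧ (0 ≤ y ∧ y ≤ √3) := by
  have h := sqrt_three_mul_self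
  have h₁ := sqrt_three_gt
  have h₂ := sqrt_three_lt
  constructor
  · rintro ⟨i, hi⟩
    fin_cases i <;> simp only [trisectionPiece] at hi <;> casesm* _ ∧ _ <;>
      refine ⟨⟨?_, ?_⟩, ?_, ?_⟩ <;> nlinarith
  · rintro ⟨⟨hx, hx'⟩, hy, hy'⟩
    rcases le_total (x + √3 * y) 3 with hl | hl
    · rcases le_total y 1 with hy1 | hy1
      · rcases le_total x 1 with hx1 | hx1
        · exact ⟨0, hx, hx1, hy, hy1⟩
        · exact ⟨1, hx1, hx', hy, hy1, hl⟩
      · rcases le_total x (2 - √3) with hx1 | hx1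
        · exact ⟨2, hx, hx1, hy1, hl⟩
        · exact ⟨3, hx1, hy1, hl⟩
    · rcases le_total x (√3 - 1) with hx1 | hx1
      · exact ⟨4, hx1, hy', hl⟩
      · exact ⟨5, hx1, hx', hy', hl⟩

theorem interior_trisectionPiece_inter_of_lt {i j : Fin 6} (hij : i < j) :
    interior {p : Plane | trisectionPiece i (p 0) (p 1)} ∩
      interior {p : Plane | trisectionPiece j (p 0) (p 1)} = ∅ := by
  have h := sqrt_three_mul_self
  have h₁ := sqrt_three_gt
  have h₂ := sqrt_three_lt
  have separate (a b c : ℝ) (hab : 0 < a * a + b * b)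
      (hi : ∀ x y, trisectionPiece i x y → a * x + b * y ≤ c)
      (hj : ∀ x y, trisectionPiece j x y → c ≤ a * x + b * y) :=
    interior_inter_interior_eq_empty_of_line a b c hab (fun p => hi (p 0) (p 1))
      (fun p => hj (p 0) (p 1))
  fin_cases i <;> fin_cases j <;> first
    | exact absurd hij (by decide)
    | (simp only [trisectionPiece] at separate
       first
        | apply separate 1 √3 3 (by nlinarith) <;> intros <;> casesm* _ ∧ _ <;> nlinarith
        | apply separate 0 1 1 (by norm_num) <;> intros <;> casesm* _ ∧ _ <;> linarith
        | apply separate 1 0 1 (by norm_num) <;> intros <;> casesm* _ ∧ _ <;> linarith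
        | apply separate 1 0 (2 - √3) (by norm_num) <;> intros <;> casesm* _ ∧ _ <;> linarith
        | apply separate 1 0 (√3 - 1) (by norm_num) <;> intros <;> casesm* _ ∧ _ <;> linarith)

theorem image_addRight_trisectionPiece (i : Fin 6) :
    IsometryEquiv.addRight (trisectionShift i) '' {p : Plane | trisectionPiece i (p 0) (p 1)} =
      {p : Plane | trisectionPiece i (p 0 - trisectionShift i 0) (p 1 - trisectionShift i 1)} := by
  ext p
  constructor
  · rintro ⟨q, hq, rfl⟩
    simpa using hq
  · intro hp
    exact ⟨p - trisectionShift i, by simpa using hp, by simp⟩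

theorem interior_image_trisectionPiece_inter_of_lt {i j : Fin 6} (hij : i < j) :
    interior {p : Plane |
        trisectionPiece i (p 0 - trisectionShift i 0) (p 1 - trisectionShift i 1)} ∩
      interior {p : Plane |
        trisectionPiece j (p 0 - trisectionShift j 0) (p 1 - trisectionShift j 1)} = ∅ := by
  have h := sqrt_three_mul_self
  have h₁ := sqrt_three_gt
  have h₂ := sqrt_three_lt
  have separate (a b c : ℝ) (hab : 0 < a * a + b * b)
      (hi : ∀ x y, trisectionPiece i (x - trisectionShift i 0) (y - trisectionShift i 1) →
        a * x + b * y ≤ c)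
      (hj : ∀ x y, trisectionPiece j (x - trisectionShift j 0) (y - trisectionShift j 1) →
        c ≤ a * x + b * y) :=
    interior_inter_interior_eq_empty_of_line a b c hab (fun p => hi (p 0) (p 1))
      (fun p => hj (p 0) (p 1))
  fin_cases i <;> fin_cases j <;> first
    | exact absurd hij (by decide)
    | apply separate 1 0 (3 / 2) (by norm_num) <;>
        (intro x y hp; simp [trisectionPiece, trisectionShift] at hp; casesm* _ ∧ _; nlinarith)
    | apply separate 1 0 (7 / 2) (by norm_num) <;>
        (intro x y hp; simp [trisectionPiece, trisectionShift] at hp; casesm* _ ∧ _; nlinarith)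
    | apply separate (-1) 0 (-7 / 2) (by norm_num) <;>
        (intro x y hp; simp [trisectionPiece, trisectionShift] at hp; casesm* _ ∧ _; nlinarith)
    | apply separate 1 0 (√3 + 1) (by norm_num) <;>
        (intro x y hp; simp [trisectionPiece, trisectionShift] at hp; casesm* _ ∧ _; nlinarith)
    | apply separate 1 √3 4 (by nlinarith) <;>
        (intro x y hp; simp [trisectionPiece, trisectionShift] at hp; casesm* _ ∧ _; nlinarith)
    | apply separate 1 √3 5 (by nlinarith) <;>
        (intro x y hp; simp [trisectionPiece, trisectionShift] at hp; casesm* _ ∧ _; nlinarith)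

theorem exists_shifted_trisectionPiece_iff (x y : ℝ) :
    (∃ i, trisectionPiece i (x - trisectionShift i 0) (y - trisectionShift i 1)) ↔
      (((0 ≤ x ∧ x ≤ 1) ∧ (0 ≤ y ∧ y ≤ 1)) ∨ ((2 ≤ x ∧ x ≤ 3) ∧ (0 ≤ y ∧ y ≤ 1))) ∨
        ((4 ≤ x ∧ x ≤ 5) ∧ (0 ≤ y ∧ y ≤ 1)) := by
  have h := sqrt_three_mul_self
  have h₁ := sqrt_three_gt
  have h₂ := sqrt_three_lt
  constructor
  · rintro ⟨i, hi⟩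
    fin_cases i <;> simp [trisectionPiece, trisectionShift] at hi <;> casesm* _ ∧ _
    · exact .inl (.inl (by refine ⟨⟨?_, ?_⟩, ?_, ?_⟩ <;> nlinarith))
    · exact .inl (.inr (by refine ⟨⟨?_, ?_⟩, ?_, ?_⟩ <;> nlinarith))
    · exact .inl (.inr (by refine ⟨⟨?_, ?_⟩, ?_, ?_⟩ <;> nlinarith))
    · exact .inr (by refine ⟨⟨?_, ?_⟩, ?_, ?_⟩ <;> nlinarith)
    · exact .inl (.inr (by refine ⟨⟨?_, ?_⟩, ?_, ?_⟩ <;> nlinarith))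
    · exact .inr (by refine ⟨⟨?_, ?_⟩, ?_, ?_⟩ <;> nlinarith)
  · rintro ((⟨⟨hx, hx'⟩, hy, hy'⟩ | ⟨⟨hx, hx'⟩, hy, hy'⟩) | ⟨⟨hx, hx'⟩, hy, hy'⟩)
    · exact ⟨0, by simp [trisectionPiece, trisectionShift, *]⟩
    · rcases le_total (x + √3 * y) 4 with hl | hl
      · rcases le_total x (√3 + 1) with hx1 | hx1
        · refine ⟨1, ?_⟩
          simp only [trisectionPiece, trisectionShift]
          simp
          refine ⟨?_, ?_, ?_, ?_, ?_⟩ <;> nlinarith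
        · refine ⟨2, ?_⟩
          simp only [trisectionPiece, trisectionShift]
          simp
          refine ⟨?_, ?_, ?_, ?_⟩ <;> nlinarith
      · refine ⟨4, ?_⟩
        simp only [trisectionPiece, trisectionShift]
        simp
        refine ⟨?_, ?_, ?_⟩ <;> nlinarith
    · rcases le_total (x + √3 * y) 5 with hl | hl
      · refine ⟨3, ?_⟩
        simp only [trisectionPiece, trisectionShift]
        simp
        refine ⟨?_, ?_, ?_⟩ <;> nlinarith
      · refine ⟨5, ?_⟩
        simp only [trisectionPiece, trisectionShift]
        simp
        refine ⟨?_, ?_, ?_, ?_⟩ <;> nlinarith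

/-- **6-piece trisection of the square.**  There are six closed subsets of the plane with
pairwise disjoint interiors whose union is the square `[0,√3] × [0,√3]`, together with six
isometries of the plane, such that the images of the pieces have pairwise disjoint interiors
and their union is the union of the three pairwise disjoint unit squares
`[0,1]×[0,1]`, `[2,3]×[0,1]` and `[4,5]×[0,1]`. -/
theorem six_piece_square_trisection :
    ∃ (P : Fin 6 → Set Plane) (g : Fin 6 → (Plane ≃ᵢ Plane)),
      (∀ i, IsClosed (P i)) ∧
      (⋃ i, P i) = rect 0 (Real.sqrt 3) 0 (Real.sqrt 3) ∧
      (∀ i j, i ≠ j → interior (P i) ∩ interior (P j) = ∅) ∧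
      (∀ i j, i ≠ j → interior (g i '' P i) ∩ interior (g j '' P j) = ∅) ∧
      (⋃ i, g i '' P i) = rect 0 1 0 1 ∪ rect 2 3 0 1 ∪ rect 4 5 0 1 := by
  refine ⟨fun i => {p | trisectionPiece i (p 0) (p 1)},
    fun i => IsometryEquiv.addRight (trisectionShift i),
    isClosed_trisectionPiece, ?_, fun i j hij => ?_, fun i j hij => ?_, ?_⟩
  · ext p
    simpa only [Set.mem_iUnion, rect, Set.mem_union, Set.mem_ofPred_eq, Set.mem_Icc] using
      exists_trisectionPiece_iff (p 0) (p 1)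
  · rcases lt_or_gt_of_ne hij with hlt | hlt
    · exact interior_trisectionPiece_inter_of_lt hlt
    · rw [Set.inter_comm]
      exact interior_trisectionPiece_inter_of_lt hlt
  · simp only [image_addRight_trisectionPiece]
    rcases lt_or_gt_of_ne hij with hlt | hlt
    · exact interior_image_trisectionPiece_inter_of_lt hlt
    · rw [Set.inter_comm]
      exact interior_image_trisectionPiece_inter_of_lt hlt
  · simp only [image_addRight_trisectionPiece]
    ext p
    simpa only [Set.mem_iUnion, rect, Set.mem_union, Set.mem_ofPred_eq, Set.mem_Icc] using
      exists_shifted_trisectionPiece_iff (p 0) (p 1)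
end

section
/- There exists a 4-piece dissection of the unit square into two equal smaller squares: there are four closed subsets P₁,…,P₄ of ℝ² whose union is the square [0,1]×[0,1], whose interiors are pairwise disjoint (the four triangles cut off by the two diagonals), together with four isometries g₁,…,g₄ of ℝ² such that the images gᵢ(Pᵢ) have pairwise disjoint interiors and their union is the union of the two disjoint squares [0,√2/2]×[0,√2/2] and [1,1+√2/2]×[0,√2/2]. -/
open Real Set

/-- The rotation with cosine `c` and sine `s`, followed by the translation by `(a, b)`. -/
noncomputable def rotateTranslate (c s a b : ℝ) (h : c ^ 2 + s ^ 2 = 1) : Plane ≃ᵢ Plane :=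
  IsometryEquiv.mk'
    (fun p => !₂[c * p 0 - s * p 1 + a, s * p 0 + c * p 1 + b])
    (fun p => !₂[c * (p 0 - a) + s * (p 1 - b), c * (p 1 - b) - s * (p 0 - a)])
    (fun p => by
      ext i
      fin_cases i <;> simp
      · linear_combination (p 0 - a) * h
      · linear_combination (p 1 - b) * h)
    (Isometry.of_dist_eq fun p q => by
      simp only [EuclideanSpace.dist_eq, Real.dist_eq, sq_abs, Fin.sum_univ_two]
      congr 1
      simp
      linear_combination ((p 0 - q 0) ^ 2 + (p 1 - q 1) ^ 2) * h)

lemma rotateTranslate_apply_zero (c s a b : ℝ) (h : c ^ 2 + s ^ 2 = 1) (p : Plane) :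
    rotateTranslate c s a b h p 0 = c * p 0 - s * p 1 + a := rfl

lemma rotateTranslate_apply_one (c s a b : ℝ) (h : c ^ 2 + s ^ 2 = 1) (p : Plane) :
    rotateTranslate c s a b h p 1 = s * p 0 + c * p 1 + b := rfl

/-- Two plane sets separated by a line have disjoint interiors. -/
lemma interior_inter_interior_eq_empty_of_separated {A B : Set Plane} (α β γ : ℝ) (hα : α ≠ 0)
    (hA : ∀ p ∈ A, α * p 0 + β * p 1 ≤ γ) (hB : ∀ p ∈ B, γ ≤ α * p 0 + β * p 1) :
    interior A ∩ interior B = ∅ := by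
  let f : Plane →L[ℝ] ℝ := α • EuclideanSpace.proj 0 + β • EuclideanSpace.proj 1
  have hfp (p : Plane) : f p = α * p 0 + β * p 1 := rfl
  have hf : f ≠ 0 := fun h => hα (by
    have := congrArg (fun φ : Plane →L[ℝ] ℝ => φ !₂[1, 0]) h
    simpa [hfp] using this)
  have hopen : IsOpen (f '' (interior A ∩ interior B)) :=
    f.isOpenMap_of_ne_zero hf _ (isOpen_interior.inter isOpen_interior)
  have hsub : f '' (interior A ∩ interior B) ⊆ {γ} := by
    rintro _ ⟨p, ⟨hpA, hpB⟩, rfl⟩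
    exact le_antisymm (hA p (interior_subset hpA)) (hB p (interior_subset hpB))
  have hempty := interior_maximal hsub hopen
  rwa [interior_singleton, subset_empty_iff, image_eq_empty] at hempty

/-- Disjointness of interiors for a linearly ordered family need only be checked for `i < j`. -/
lemma interior_inter_interior_eq_empty_of_lt {ι X : Type*} [LinearOrder ι] [TopologicalSpace X]
    {A : ι → Set X} (h : ∀ i j, i < j → interior (A i) ∩ interior (A j) = ∅) (i j : ι)
    (hij : i ≠ j) : interior (A i) ∩ interior (A j) = ∅ := by
  rcases hij.lt_or_gt with hlt | hlt
  · exact h i j hlt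
  · rw [inter_comm]
    exact h j i hlt

/-- The bottom, left, right and top triangles cut off by the diagonals of the unit square. -/
def diagonalTriangle : Fin 4 → Set Plane :=
  ![{p | 0 ≤ p 1 ∧ p 1 ≤ p 0 ∧ p 0 + p 1 ≤ 1},
    {p | 0 ≤ p 0 ∧ p 0 ≤ p 1 ∧ p 0 + p 1 ≤ 1},
    {p | p 0 ≤ 1 ∧ p 1 ≤ p 0 ∧ 1 ≤ p 0 + p 1},
    {p | p 1 ≤ 1 ∧ p 0 ≤ p 1 ∧ 1 ≤ p 0 + p 1}]

/-- The halves of `[0, r] × [0, r]` above and below the antidiagonal, followed by the halves of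
`[1, 1 + r] × [0, r]` above and below the main diagonal. -/
def halfSquare (r : ℝ) : Fin 4 → Set Plane :=
  ![{p | p 0 ≤ r ∧ p 1 ≤ r ∧ r ≤ p 0 + p 1},
    {p | 0 ≤ p 0 ∧ 0 ≤ p 1 ∧ p 0 + p 1 ≤ r},
    {p | 1 ≤ p 0 ∧ p 1 ≤ r ∧ p 0 - 1 ≤ p 1},
    {p | p 0 ≤ 1 + r ∧ 0 ≤ p 1 ∧ p 1 ≤ p 0 - 1}]

/-- The rigid motions carrying each `diagonalTriangle` to the corresponding `halfSquare`. -/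
noncomputable def triangleMotion (r : ℝ) (hr : r ^ 2 = 1 / 2) : Fin 4 → (Plane ≃ᵢ Plane) :=
  ![rotateTranslate r (-r) 0 r (by linarith [neg_sq r]),
    rotateTranslate (-r) (-r) 0 r (by linarith [neg_sq r]),
    rotateTranslate r (-r) (1 - r) r (by linarith [neg_sq r]),
    rotateTranslate r r (1 + r) (-r) (by linarith)]

lemma isClosed_diagonalTriangle (i : Fin 4) : IsClosed (diagonalTriangle i) := by
  fin_cases i <;>
    refine IsClosed.and ?_ (IsClosed.and ?_ ?_) <;>
    apply isClosed_le <;> fun_prop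

lemma iUnion_diagonalTriangle : ⋃ i, diagonalTriangle i = rect 0 1 0 1 := by
  ext p
  simp only [mem_iUnion, Fin.exists_fin_succ, diagonalTriangle, rect, mem_ofPred_eq, mem_Icc]
  simp
  grind

lemma interior_diagonalTriangle_inter (i j : Fin 4) (hij : i ≠ j) :
    interior (diagonalTriangle i) ∩ interior (diagonalTriangle j) = ∅ := by
  refine interior_inter_interior_eq_empty_of_lt (fun i j hlt => ?_) i j hij
  by_cases h₀₁ : i = 0 ∧ j = 1
  · obtain ⟨rfl, rfl⟩ := h₀₁
    refine interior_inter_interior_eq_empty_of_separated (-1) 1 0 (by norm_num) ?_ ?_ <;>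
      rintro p ⟨h₁, h₂, h₃⟩ <;> linarith
  by_cases h₂₃ : i = 2 ∧ j = 3
  · obtain ⟨rfl, rfl⟩ := h₂₃
    refine interior_inter_interior_eq_empty_of_separated (-1) 1 0 (by norm_num) ?_ ?_ <;>
      rintro p ⟨h₁, h₂, h₃⟩ <;> linarith
  refine interior_inter_interior_eq_empty_of_separated 1 1 1 one_ne_zero ?_ ?_ <;>
    fin_cases i <;> fin_cases j <;> first
      | (rintro p ⟨h₁, h₂, h₃⟩; linarith)
      | simp at h₀₁ h₂₃ hlt

lemma interior_halfSquare_inter {r : ℝ} (hr : r ≤ 1) (i j : Fin 4) (hij : i ≠ j) :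
    interior (halfSquare r i) ∩ interior (halfSquare r j) = ∅ := by
  refine interior_inter_interior_eq_empty_of_lt (fun i j hlt => ?_) i j hij
  by_cases h₀₁ : i = 0 ∧ j = 1
  · obtain ⟨rfl, rfl⟩ := h₀₁
    refine interior_inter_interior_eq_empty_of_separated (-1) (-1) (-r) (by norm_num) ?_ ?_ <;>
      rintro p ⟨h₁, h₂, h₃⟩ <;> linarith
  by_cases h₂₃ : i = 2 ∧ j = 3
  · obtain ⟨rfl, rfl⟩ := h₂₃
    refine interior_inter_interior_eq_empty_of_separated 1 (-1) 1 one_ne_zero ?_ ?_ <;>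
      rintro p ⟨h₁, h₂, h₃⟩ <;> linarith
  refine interior_inter_interior_eq_empty_of_separated 1 0 1 one_ne_zero ?_ ?_ <;>
    fin_cases i <;> fin_cases j <;> first
      | (rintro p ⟨h₁, h₂, h₃⟩; linarith)
      | simp at h₀₁ h₂₃ hlt

lemma iUnion_halfSquare (r : ℝ) :
    ⋃ i, halfSquare r i = rect 0 r 0 r ∪ rect 1 (1 + r) 0 r := by
  ext p
  simp only [mem_iUnion, Fin.exists_fin_succ, halfSquare, rect, mem_ofPred_eq, mem_Icc, mem_union]
  simp
  grind

lemma triangleMotion_image {r : ℝ} (hpos : 0 < r) (hr : r ^ 2 = 1 / 2) (i : Fin 4) :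
    triangleMotion r hr i '' diagonalTriangle i = halfSquare r i := by
  suffices h : diagonalTriangle i = triangleMotion r hr i ⁻¹' halfSquare r i by
    rw [h, image_preimage_eq _ (triangleMotion r hr i).surjective]
  ext p
  fin_cases i <;>
    simp [diagonalTriangle, triangleMotion, halfSquare, rotateTranslate_apply_zero,
      rotateTranslate_apply_one] <;>
    constructor <;> rintro ⟨h₁, h₂, h₃⟩ <;> refine ⟨?_, ?_, ?_⟩ <;> nlinarith

/-- **4-piece dissection of the unit square into two equal smaller squares.**  There are four
closed subsets of the plane with pairwise disjoint interiors whose union is the unit square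
`[0,1] × [0,1]` (the four triangles cut off by the two diagonals), together with four
isometries of the plane such that the images of the pieces have pairwise disjoint interiors
and their union is the union of the two disjoint squares `[0,√2/2] × [0,√2/2]` and
`[1, 1+√2/2] × [0,√2/2]`. -/
theorem four_piece_square_bisection :
    ∃ (P : Fin 4 → Set Plane) (g : Fin 4 → (Plane ≃ᵢ Plane)),
      (∀ i, IsClosed (P i)) ∧
      (⋃ i, P i) = rect 0 1 0 1 ∧
      (∀ i j, i ≠ j → interior (P i) ∩ interior (P j) = ∅) ∧
      (∀ i j, i ≠ j → interior (g i '' P i) ∩ interior (g j '' P j) = ∅) ∧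
      (⋃ i, g i '' P i) =
        rect 0 (Real.sqrt 2 / 2) 0 (Real.sqrt 2 / 2) ∪
          rect 1 (1 + Real.sqrt 2 / 2) 0 (Real.sqrt 2 / 2) := by
  have hpos : 0 < √2 / 2 := by positivity
  have hsq : (√2 / 2) ^ 2 = 1 / 2 := by
    rw [div_pow, Real.sq_sqrt (by norm_num)]
    norm_num
  refine ⟨diagonalTriangle, triangleMotion (√2 / 2) hsq, isClosed_diagonalTriangle,
    iUnion_diagonalTriangle, interior_diagonalTriangle_inter, ?_, ?_⟩ <;>
    simp only [triangleMotion_image hpos hsq]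
  · exact interior_halfSquare_inter (by nlinarith)
  · exact iUnion_halfSquare _
end
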